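/- Let X = {x_0, …, x_M} be M+1 distinct real points, let u, v be positive functions on X with u(x_k)·v(x_k) = 1/∏_{i≠k}(x_k − x_i)² for every k, and let P_0,…,P_M and Q_0,…,Q_M be orthogonal polynomials for u and v with squared norms p_i, q_i. With K_u^{(m)} and K_v^{(m)} the Christoffel–Darboux kernels as below and ε(x_k) = sgn ∏_{i≠k}(x_k − x_i), for every m = 1,…,M and all x ≠ y in X: K_u^{(m)}(x,y) = −ε(x)·ε(y)·K_v^{(M−m+1)}(x,y). -/

import Mathlib

/-!
Put `D k = ∏_{i ≠ k} (x k - x i)`, so that `u k * v k = 1 / (D k)²` and `ε k = sgn (D k)`.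
The vectors `√u · f` with `deg f < m` and `ε √v · g` with `deg g < M - m + 1` are orthogonal:
their inner product is `∑ k, f (x k) g (x k) / D k`, the coefficient of degree `M` of the
interpolation polynomial of `f g`, and `deg (f g) < M` (`sum_eval_div_nodal_eq_zero`). The two
spaces have complementary dimensions `m` and `M - m + 1`, so together the functions `√u P_i`
(`i < m`) and `ε √v Q_j` (`j ≤ M - m`) form an orthogonal basis of `ℝ^(M+1)`. Completeness of this
basis says that the kernel of `u` plus `ε(x) ε(y)` times the kernel of `v` is the identity matrix;
its off-diagonal entries give the theorem.
-/

open Finset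

/-- The Christoffel–Darboux kernel
`K_w^{(m)}(x_k, x_l) = √(w(x_k) w(x_l)) ∑_{i=0}^{m-1} R_i(x_k) R_i(x_l)/r_i`. -/
noncomputable def cdKernel {M : ℕ} (x w : Fin (M + 1) → ℝ)
    (R : Fin (M + 1) → Polynomial ℝ) (r : Fin (M + 1) → ℝ) (m : ℕ)
    (k l : Fin (M + 1)) : ℝ :=
  Real.sqrt (w k * w l) *
    ∑ i ∈ Finset.univ.filter (fun i : Fin (M + 1) => (i : ℕ) < m),
      (R i).eval (x k) * (R i).eval (x l) / r i

/-- The divided difference of order `M` annihilates polynomials of degree less than `M`. -/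
lemma sum_eval_div_nodal_eq_zero {M : ℕ} {x : Fin (M + 1) → ℝ} (hx : Function.Injective x)
    {f : Polynomial ℝ} (hf : f.degree < M) :
    ∑ k, f.eval (x k) / ∏ i ∈ Finset.univ.erase k, (x k - x i) = 0 := by
  have h := Lagrange.coeff_eq_sum (s := (Finset.univ : Finset (Fin (M + 1)))) (v := x) (P := f)
    hx.injOn (by
      rw [Finset.card_univ, Fintype.card_fin]
      exact hf.trans (by exact_mod_cast Nat.lt_succ_self M))
  rw [← h]
  simpa using Polynomial.coeff_eq_zero_of_degree_lt hf

/-- The square root of `u v = 1 / D²`, with the sign of `D` restored, is `1 / D`. -/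
lemma sign_mul_sqrt_mul_sqrt {a b d : ℝ} (ha : 0 < a) (hd : d ≠ 0) (h : a * b = 1 / d ^ 2) :
    Real.sign d * √b * √a = 1 / d := by
  have h1 : √b * √a = 1 / |d| := by
    rw [mul_comm, ← Real.sqrt_mul ha.le, h, Real.sqrt_div zero_le_one, Real.sqrt_one,
      Real.sqrt_sq_eq_abs]
  rw [mul_assoc, h1]
  rcases lt_or_gt_of_ne hd with hd' | hd'
  · rw [Real.sign_of_neg hd', abs_of_neg hd']
    field_simp
  · rw [Real.sign_of_pos hd', abs_of_pos hd', one_mul]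

lemma sq_sign_eq_one {d : ℝ} (hd : d ≠ 0) : Real.sign d * Real.sign d = 1 := by
  rcases Real.sign_apply_eq_of_ne_zero d hd with h | h <;> rw [h] <;> norm_num

/-- For all `x ≠ y` in `X`:
`K_u^{(m)}(x,y) = -ε(x) ε(y) K_v^{(M-m+1)}(x,y)`. -/
theorem kernel_offdiagonal_duality
    (M : ℕ) (x : Fin (M + 1) → ℝ) (hx : Function.Injective x)
    (u v : Fin (M + 1) → ℝ) (hu : ∀ k, 0 < u k) (hv : ∀ k, 0 < v k)
    (huv : ∀ k, u k * v k = 1 / ∏ i ∈ Finset.univ.erase k, (x k - x i) ^ 2)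
    (P Q : Fin (M + 1) → Polynomial ℝ) (p q : Fin (M + 1) → ℝ)
    (hPdeg : ∀ i, (P i).degree = (i : ℕ))
    (hQdeg : ∀ i, (Q i).degree = (i : ℕ))
    (hp : ∀ i, 0 < p i) (hq : ∀ i, 0 < q i)
    (hPorth : ∀ i j, ∑ k, (P i).eval (x k) * (P j).eval (x k) * u k
        = if i = j then p i else 0)
    (hQorth : ∀ i j, ∑ k, (Q i).eval (x k) * (Q j).eval (x k) * v k
        = if i = j then q i else 0)
    (ε : Fin (M + 1) → ℝ)
    (hε : ∀ k, ε k = Real.sign (∏ i ∈ Finset.univ.erase k, (x k - x i)))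
    (m : ℕ) (hm1 : 1 ≤ m) (hmM : m ≤ M) :
    ∀ k l : Fin (M + 1), x k ≠ x l →
      cdKernel x u P p m k l
        = -(ε k) * ε l * cdKernel x v Q q (M - m + 1) k l := by
  intro k l hkl
  have hkl' : k ≠ l := fun h => hkl (by rw [h])
  have hD : ∀ k, ∏ i ∈ Finset.univ.erase k, (x k - x i) ≠ 0 := fun k =>
    Finset.prod_ne_zero_iff.mpr fun i hi =>
      sub_ne_zero.mpr fun h => (Finset.ne_of_mem_erase hi) (hx h).symm
  have hsq : ∀ k, ε k * ε k = 1 := fun k => by rw [hε]; exact sq_sign_eq_one (hD k)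
  have hmix : ∀ k, ε k * √(v k) * √(u k) = 1 / ∏ i ∈ Finset.univ.erase k, (x k - x i) := by
    intro k
    rw [hε]
    exact sign_mul_sqrt_mul_sqrt (hu k) (hD k) (by rw [huv, Finset.prod_pow])
  have hsu : ∀ k, √(u k) * √(u k) = u k := fun k => Real.mul_self_sqrt (hu k).le
  have hsv : ∀ k, √(v k) * √(v k) = v k := fun k => Real.mul_self_sqrt (hv k).le
  have hcross : ∀ i j : Fin (M + 1), (i : ℕ) < m → ¬ (j : ℕ) < m →
      ∑ t, (√(u t) * (P i).eval (x t)) * (ε t * √(v t) * (Q j.rev).eval (x t)) = 0 := by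
    intro i j hi hj
    have hdeg : (P i * Q j.rev).degree < M := by
      rw [Polynomial.degree_mul, hPdeg, hQdeg, ← Nat.cast_add, Nat.cast_lt, Fin.val_rev]
      have := j.isLt
      omega
    rw [← sum_eval_div_nodal_eq_zero hx hdeg]
    refine Finset.sum_congr rfl fun t _ => ?_
    rw [Polynomial.eval_mul, div_eq_mul_one_div, ← hmix]
    ring
  -- The joint basis: `√u P_i` for `i < m`, then `ε √v Q_{M - i}` for `i ≥ m`; `c` holds its
  -- squared norms.
  let B : Matrix (Fin (M + 1)) (Fin (M + 1)) ℝ := fun i t =>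
    if (i : ℕ) < m then √(u t) * (P i).eval (x t) else ε t * √(v t) * (Q i.rev).eval (x t)
  let c : Fin (M + 1) → ℝ := fun i => if (i : ℕ) < m then p i else q i.rev
  have hc : ∀ i, c i ≠ 0 := by
    intro i
    dsimp only [c]
    split_ifs
    exacts [(hp i).ne', (hq _).ne']
  have horth : ∀ i j, ∑ t, B i t * B j t = if i = j then c i else 0 := by
    intro i j
    by_cases hi : (i : ℕ) < m <;> by_cases hj : (j : ℕ) < m
    · simp only [B, c, hi, hj, if_true]
      rw [← hPorth]
      refine Finset.sum_congr rfl fun t _ => ?_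
      linear_combination (P i).eval (x t) * (P j).eval (x t) * hsu t
    · have hij : i ≠ j := by rintro rfl; exact hj hi
      simp only [B, hi, hj, if_true, if_false, hij]
      exact hcross i j hi hj
    · have hij : i ≠ j := by rintro rfl; exact hi hj
      simp only [B, hi, hj, if_true, if_false, hij]
      rw [← hcross j i hj hi]
      exact Finset.sum_congr rfl fun t _ => mul_comm _ _
    · simp only [B, c, hi, hj, if_false]
      have h := hQorth i.rev j.rev
      simp only [Fin.rev_inj] at h
      rw [← h]
      refine Finset.sum_congr rfl fun t _ => ?_
      linear_combination (Q i.rev).eval (x t) * (Q j.rev).eval (x t) *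
        (√(v t) * √(v t) * hsq t + hsv t)
  have hinv : (Matrix.of fun i t => B i t / c i) * B.transpose = 1 := by
    ext i j
    rw [Matrix.mul_apply, Matrix.one_apply]
    simp only [Matrix.of_apply, Matrix.transpose_apply, div_mul_eq_mul_div]
    rw [← Finset.sum_div, horth]
    split_ifs
    · exact div_self (hc i)
    · exact zero_div _
  -- A right inverse of a square matrix is a left inverse: completeness of the joint basis.
  have hinv' := mul_eq_one_comm.mp hinv
  have hcomp := congrFun (congrFun hinv' k) l
  rw [Matrix.mul_apply, Matrix.one_apply_ne hkl',
    ← Finset.sum_filter_add_sum_filter_not Finset.univ (fun i : Fin (M + 1) => (i : ℕ) < m)]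
    at hcomp
  have hU : ∑ i ∈ Finset.univ.filter (fun i : Fin (M + 1) => (i : ℕ) < m),
      B.transpose k i * (Matrix.of fun i t => B i t / c i) i l = cdKernel x u P p m k l := by
    rw [cdKernel, Finset.mul_sum]
    refine Finset.sum_congr rfl fun i hi => ?_
    have hi' := (Finset.mem_filter.mp hi).2
    rw [Matrix.transpose_apply, Matrix.of_apply]
    simp only [B, c, hi', if_true]
    rw [Real.sqrt_mul (hu k).le]
    ring
  have hV : ∑ i ∈ Finset.univ.filter (fun i : Fin (M + 1) => ¬ (i : ℕ) < m),
      B.transpose k i * (Matrix.of fun i t => B i t / c i) i l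
        = ε k * ε l * cdKernel x v Q q (M - m + 1) k l := by
    rw [cdKernel, Finset.mul_sum, Finset.mul_sum]
    refine Finset.sum_bij' (fun i _ => i.rev) (fun i _ => i.rev) ?_ ?_ ?_ ?_ ?_
    · intro i hi
      have hi' := (Finset.mem_filter.mp hi).2
      refine Finset.mem_filter.mpr ⟨Finset.mem_univ _, ?_⟩
      rw [Fin.val_rev]
      omega
    · intro i hi
      have hi' := (Finset.mem_filter.mp hi).2
      refine Finset.mem_filter.mpr ⟨Finset.mem_univ _, ?_⟩
      rw [Fin.val_rev]
      omega
    · exact fun i _ => Fin.rev_rev i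
    · exact fun i _ => Fin.rev_rev i
    · intro i hi
      have hi' := (Finset.mem_filter.mp hi).2
      rw [Matrix.transpose_apply, Matrix.of_apply]
      simp only [B, c, hi', if_false]
      rw [Real.sqrt_mul (hv k).le]
      ring
  rw [hU, hV] at hcomp
  linear_combination hcomp
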